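/- Let (X,◁) be a finite abelian quandle and let O be an orbit of (X,◁) with n elements. Then every torsion element z of the orbit component H_{2;O}(X,◁) of the second rack homology group satisfies n² · z = 0; in other words, the order of any element of the torsion subgroup of H_{2;O}(X,◁) divides n². -/

import Mathlib

variable {X : Type*}

/-- Quandle axioms for a binary operation `op` (right-translation convention):
self-distributivity, bijectivity of right translations, idempotence. -/
structure IsQuandleOp (op : X → X → X) : Prop where
  sd : ∀ a b c, op (op a b) c = op (op a c) (op b c)
  bij : ∀ b, Function.Bijective fun a => op a b
  idem : ∀ a, op a a = a

/-- A quandle operation is abelian if `(a ◁ b) ◁ c = (a ◁ c) ◁ b`. -/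
def IsAbelianOp (op : X → X → X) : Prop :=
  ∀ a b c, op (op a b) c = op (op a c) b

/-- The smallest equivalence relation identifying `a` with `op a b`. -/
def orbitRel (op : X → X → X) : X → X → Prop :=
  Relation.EqvGen fun a b => ∃ c, op a c = b

/-- The setoid of orbits of a quandle. -/
def orbitSetoid (op : X → X → X) : Setoid X :=
  ⟨orbitRel op, Relation.EqvGen.is_equivalence _⟩

/-- The second rack differential `d₂(a,b) = (a◁b) - (a)`. -/
def d2 (op : X → X → X) : FreeAbelianGroup (X × X) →+ FreeAbelianGroup X :=
  FreeAbelianGroup.lift fun p =>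
    FreeAbelianGroup.of (op p.1 p.2) - FreeAbelianGroup.of p.1

/-- The third rack differential
`d₃(a,b,c) = (a◁b,c) - (a,c) - (a◁c, b◁c) + (a,b)`. -/
def d3 (op : X → X → X) : FreeAbelianGroup (X × X × X) →+ FreeAbelianGroup (X × X) :=
  FreeAbelianGroup.lift fun t =>
    FreeAbelianGroup.of (op t.1 t.2.1, t.2.2) - FreeAbelianGroup.of (t.1, t.2.2)
      - FreeAbelianGroup.of (op t.1 t.2.2, op t.2.1 t.2.2)
      + FreeAbelianGroup.of (t.1, t.2.1)

/-- The second rack homology group `H₂ = ker d₂ / im d₃`. -/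
abbrev H2 (op : X → X → X) : Type _ :=
  ↥((d2 op).ker) ⧸ ((d3 op).range.addSubgroupOf (d2 op).ker)

/-- Chains in degree 2 whose first coordinate lies in `O`. -/
def orbC2 (O : Set X) : AddSubgroup (FreeAbelianGroup (X × X)) :=
  AddSubgroup.closure {z | ∃ p : X × X, p.1 ∈ O ∧ z = FreeAbelianGroup.of p}

/-- Chains in degree 3 whose first coordinate lies in `O`. -/
def orbC3 (O : Set X) : AddSubgroup (FreeAbelianGroup (X × X × X)) :=
  AddSubgroup.closure {z | ∃ t : X × X × X, t.1 ∈ O ∧ z = FreeAbelianGroup.of t}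

/-- The orbit component `H_{2;O} = (ker d₂ ∩ ℤ(O×X)) / d₃(ℤ(O×X×X))` of `H₂`. -/
abbrev H2Orb (op : X → X → X) (O : Set X) : Type _ :=
  ↥((d2 op).ker ⊓ orbC2 O) ⧸
    (((orbC3 O).map (d3 op)).addSubgroupOf ((d2 op).ker ⊓ orbC2 O))

/-!
Inner automorphisms act on `H_{2;O}` by translating the first coordinate. For an abelian rack the
inner group is commutative, so the `n`-th power of each of its elements fixes the orbit `O`
pointwise. For the right translation `s` by `c`, the map `s - 1` is homologous on cycles to
`(b, x) ↦ (b ◁ x, c ◁ x) - (b ◁ x, c)`, whose values are fixed by right translations modulo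
boundaries because `b ◁ (c ◁ x) = b ◁ c`. So `(s - 1)² = 0` on `H_{2;O}`, whence
`0 = sⁿ - 1 = n • (s - 1)`, and therefore `n • (g - 1) = 0` for every inner `g`.

Choosing for each `b ∈ O` an inner `g_b` with `g_b a = b`, the sum `∑ g_b` sends a generator
`(b, x)` to `∑_{b' ∈ O} (b', x)`, whose class modulo boundaries depends only on the orbit of `x`.
Therefore `∑ g_b` factors through the free abelian group on the set of orbits, and it kills
torsion. For a torsion class `z` this gives `n² • z = ∑ n • g_b z = 0`.
-/

open FreeAbelianGroup

open MulAction (orbit stabilizer index_stabilizer orbit_eq_iff mem_orbit mem_orbit_symm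
  mapsTo_smul_orbit toPerm)

theorem pow_sub_one_eq_nsmul {R : Type*} [Ring R] {r : R} (hr : (r - 1) * (r - 1) = 0) (k : ℕ) :
    r ^ k - 1 = k • (r - 1) := by
  induction k with
  | zero => simp
  | succ k ih =>
    calc r ^ (k + 1) - 1 = (r ^ k - 1) * (r - 1) + (r ^ k - 1) + (r - 1) := by
          rw [pow_succ]; noncomm_ring
      _ = (k + 1) • (r - 1) := by
          rw [ih, smul_mul_assoc, hr, smul_zero, zero_add, succ_nsmul]

theorem nsmul_map_sub_one_eq_zero_of_closure {G R : Type*} [Group G] [Ring R] (φ : G →* R)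
    {S : Set G} (hS : Subgroup.closure S = ⊤) {n : ℕ} (h : ∀ s ∈ S, n • (φ s - 1) = 0) (g : G) :
    n • (φ g - 1) = 0 := by
  have hg : g ∈ Subgroup.closure S := hS ▸ Subgroup.mem_top g
  induction hg using Subgroup.closure_induction with
  | mem s hs => exact h s hs
  | one => simp
  | mul g k _ _ ihg ihk =>
    calc n • (φ (g * k) - 1) = n • (φ g - 1) * φ k + n • (φ k - 1) := by
          rw [map_mul, smul_mul_assoc, ← smul_add, sub_mul, one_mul, sub_add_sub_cancel]
      _ = 0 := by rw [ihg, ihk, zero_mul, zero_add]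
  | inv g _ ih =>
    calc n • (φ g⁻¹ - 1) = -(n • (φ g - 1) * φ g⁻¹) := by
          rw [smul_mul_assoc, sub_mul, ← map_mul, mul_inv_cancel, map_one, one_mul, ← smul_neg,
            neg_sub]
      _ = 0 := by rw [ih, zero_mul, neg_zero]

theorem pow_ncard_orbit_smul {G Y : Type*} [Group G] [IsMulCommutative G] [MulAction G Y]
    (g : G) {a b : Y} (hb : b ∈ orbit G a) : g ^ (orbit G a).ncard • b = b := by
  have h := (stabilizer G b).pow_index_mem g
  rwa [index_stabilizer, orbit_eq_iff.2 hb] at h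

instance {Y : Type*} : IsAddTorsionFree (FreeAbelianGroup Y) :=
  Module.isTorsionFree_int_iff_isAddTorsionFree.1 inferInstance

/-- Rack axioms for a binary operation, in the convention of `IsQuandleOp` but without
idempotence. -/
structure IsRackOp (op : X → X → X) : Prop where
  sd : ∀ a b c, op (op a b) c = op (op a c) (op b c)
  bij : ∀ b, Function.Bijective fun a => op a b

theorem IsQuandleOp.isRackOp {op : X → X → X} (hq : IsQuandleOp op) : IsRackOp op :=
  ⟨hq.sd, hq.bij⟩

section Chains

variable {op : X → X → X} {O : Set X}

/-- The cycles `ker d₂ ∩ ℤ(O×X)` representing the classes of `H2Orb op O`. -/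
abbrev orbZ2 (op : X → X → X) (O : Set X) : AddSubgroup (FreeAbelianGroup (X × X)) :=
  (d2 op).ker ⊓ orbC2 O

/-- The boundaries `d₃(ℤ(O×X×X))` divided out in `H2Orb op O`. -/
abbrev orbB2 (op : X → X → X) (O : Set X) : AddSubgroup (FreeAbelianGroup (X × X)) :=
  (orbC3 O).map (d3 op)

@[simp]
theorem d2_of (b x : X) : d2 op (of (b, x)) = of (op b x) - of b :=
  lift_apply_of _ _

theorem d3_of (b x y : X) :
    d3 op (of (b, x, y)) = of (op b x, y) - of (b, y) - of (op b y, op x y) + of (b, x) :=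
  lift_apply_of _ _

theorem of_mem_orbC2 {b : X} (hb : b ∈ O) (x : X) : of (b, x) ∈ orbC2 O :=
  AddSubgroup.subset_closure ⟨(b, x), hb, rfl⟩

theorem orbC2_le {K : AddSubgroup (FreeAbelianGroup (X × X))}
    (h : ∀ b ∈ O, ∀ x, of (b, x) ∈ K) : orbC2 O ≤ K := by
  refine (AddSubgroup.closure_le _).2 ?_
  rintro _ ⟨⟨b, x⟩, hb, rfl⟩
  exact h b hb x

theorem map_eq_map_of_mem_orbC2 {A : Type*} [AddCommGroup A]
    {f g : FreeAbelianGroup (X × X) →+ A} (h : ∀ b ∈ O, ∀ x, f (of (b, x)) = g (of (b, x)))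
    {z : FreeAbelianGroup (X × X)} (hz : z ∈ orbC2 O) : f z = g z :=
  orbC2_le (K := f.eqLocus g) h hz

theorem d3_of_mem_orbB2 {b : X} (hb : b ∈ O) (x y : X) : d3 op (of (b, x, y)) ∈ orbB2 op O :=
  AddSubgroup.mem_map_of_mem _ (AddSubgroup.subset_closure ⟨(b, x, y), hb, rfl⟩)

theorem orbB2_le {K : AddSubgroup (FreeAbelianGroup (X × X))}
    (h : ∀ b ∈ O, ∀ x y, d3 op (of (b, x, y)) ∈ K) : orbB2 op O ≤ K := by
  refine AddSubgroup.map_le_iff_le_comap.2 ((AddSubgroup.closure_le _).2 ?_)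
  rintro _ ⟨⟨b, x, y⟩, hb, rfl⟩
  exact h b hb x y

/-- The action of `g` on 2-chains through the first coordinate. -/
def fstSMul {G : Type*} [SMul G X] (g : G) :
    FreeAbelianGroup (X × X) →+ FreeAbelianGroup (X × X) :=
  FreeAbelianGroup.map fun p => (g • p.1, p.2)

@[simp]
theorem fstSMul_of {G : Type*} [SMul G X] (g : G) (b x : X) :
    fstSMul g (of (b, x)) = of (g • b, x) :=
  map_of_apply _

theorem fstSMul_one {G : Type*} [Monoid G] [MulAction G X] (z : FreeAbelianGroup (X × X)) :
    fstSMul (1 : G) z = z :=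
  DFunLike.congr_fun (lift_ext _ (AddMonoidHom.id _) fun ⟨b, x⟩ => by simp) z

theorem fstSMul_mul {G : Type*} [Monoid G] [MulAction G X] (g h : G)
    (z : FreeAbelianGroup (X × X)) : fstSMul (g * h) z = fstSMul g (fstSMul h z) :=
  DFunLike.congr_fun (lift_ext _ ((fstSMul g).comp (fstSMul h)) fun ⟨b, x⟩ => by
    simp [mul_smul]) z

/-- The map `ℤ(X×X) → ℤ(X/∼)` sending `(b, x)` to the orbit of `x`. It vanishes on boundaries, and
its target being torsion-free, also on torsion classes. -/
def sndOrbit (op : X → X → X) :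
    FreeAbelianGroup (X × X) →+ FreeAbelianGroup (Quotient (orbitSetoid op)) :=
  FreeAbelianGroup.map fun p => Quotient.mk _ p.2

theorem sndOrbit_of (b x : X) :
    sndOrbit op (of (b, x)) = of (Quotient.mk (orbitSetoid op) x) :=
  map_of_apply _

theorem orbB2_le_ker_sndOrbit : orbB2 op O ≤ (sndOrbit op).ker := by
  refine orbB2_le fun b _ x y => ?_
  have hxy : Quotient.mk (orbitSetoid op) (op x y) = Quotient.mk _ x :=
    Quotient.sound (.symm _ _ (.rel _ _ ⟨y, rfl⟩))
  simp [AddMonoidHom.mem_ker, d3_of, sndOrbit_of, hxy]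

theorem sndOrbit_eq_zero_of_isOfFinAddOrder (z : orbZ2 op O)
    (hz : IsOfFinAddOrder (z : H2Orb op O)) : sndOrbit op z = 0 := by
  let φ : H2Orb op O →+ FreeAbelianGroup (Quotient (orbitSetoid op)) :=
    QuotientAddGroup.lift _ ((sndOrbit op).comp (orbZ2 op O).subtype)
      fun y hy => orbB2_le_ker_sndOrbit hy
  exact isOfFinAddOrder_iff_eq_zero _ |>.1 (φ.isOfFinAddOrder hz)

/-- The homomorphism `(b, x) ↦ (b ◁ x, c ◁ x) - (b ◁ x, c)`, to which `(b, x) ↦ (b ◁ c, x) - (b, x)`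
is homologous on cycles. -/
def conjDiff (op : X → X → X) (c : X) : FreeAbelianGroup (X × X) →+ FreeAbelianGroup (X × X) :=
  FreeAbelianGroup.lift fun p => of (op p.1 p.2, op c p.2) - of (op p.1 p.2, c)

@[simp]
theorem conjDiff_of (c b x : X) :
    conjDiff op c (of (b, x)) = of (op b x, op c x) - of (op b x, c) :=
  lift_apply_of _ _

/-- The map `(b, x) ↦ ∑_{b' ∈ O} (b', x)`. -/
def orbitSum (O : Set X) [Fintype O] : FreeAbelianGroup (X × X) →+ FreeAbelianGroup (X × X) :=
  FreeAbelianGroup.lift fun p => ∑ b : O, of (b.1, p.2)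

@[simp]
theorem orbitSum_of [Fintype O] (b x : X) : orbitSum O (of (b, x)) = ∑ b : O, of (b.1, x) :=
  lift_apply_of _ _

end Chains

namespace IsRackOp

variable {op : X → X → X}

theorem op_op_right (hr : IsRackOp op) (hab : IsAbelianOp op) (a b c : X) :
    op a (op b c) = op a b := by
  obtain ⟨a, rfl⟩ := (hr.bij c).2 a
  exact (hr.sd a b c).symm.trans (hab a b c)

variable (hr : IsRackOp op)

/-- The right translation `a ↦ a ◁ c` as a permutation. -/
noncomputable def translation (c : X) : Equiv.Perm X :=
  Equiv.ofBijective _ (hr.bij c)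

/-- The inner automorphism group, generated by the right translations. -/
def innerGroup : Subgroup (Equiv.Perm X) :=
  Subgroup.closure (Set.range hr.translation)

/-- The right translation by `c` as an element of the inner group. -/
noncomputable def innerTranslation (c : X) : hr.innerGroup :=
  ⟨hr.translation c, Subgroup.subset_closure ⟨c, rfl⟩⟩

theorem innerTranslation_smul (c b : X) : hr.innerTranslation c • b = op b c := rfl

theorem closure_range_innerTranslation :
    Subgroup.closure (Set.range hr.innerTranslation) = ⊤ := by
  have hrange : Set.range hr.innerTranslation =
      ((↑) : hr.innerGroup → Equiv.Perm X) ⁻¹' Set.range hr.translation := by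
    ext g
    exact exists_congr fun c => Subtype.ext_iff
  rw [hrange]
  exact Subgroup.closure_closure_coe_preimage

theorem orbitRel_smul (g : hr.innerGroup) (b : X) : orbitRel op b (g • b) := by
  obtain ⟨g, hg⟩ := g
  change orbitRel op b (g b)
  induction hg using Subgroup.closure_induction generalizing b with
  | mem _ hs =>
    obtain ⟨c, rfl⟩ := hs
    exact .rel _ _ ⟨c, rfl⟩
  | one => exact .refl _
  | mul g k _ _ ihg ihk => exact (ihk b).trans _ _ _ (ihg (k b))
  | inv g _ ih =>
    have h : orbitRel op (g⁻¹ b) b := by simpa using ih (g⁻¹ b)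
    exact h.symm

theorem setOf_orbitRel_eq_orbit (a : X) : {x | orbitRel op a x} = orbit hr.innerGroup a := by
  ext x
  refine ⟨fun h => ?_, ?_⟩
  · have hle : orbitSetoid op ≤ MulAction.orbitRel hr.innerGroup X := by
      refine Setoid.eqvGen_le ?_
      rintro b _ ⟨c, rfl⟩
      exact mem_orbit_symm.1 (mem_orbit b (hr.innerTranslation c))
    exact mem_orbit_symm.1 (hle h)
  · rintro ⟨g, rfl⟩
    exact hr.orbitRel_smul g a

theorem isMulCommutative_innerGroup (hab : IsAbelianOp op) : IsMulCommutative hr.innerGroup := by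
  refine Subgroup.isMulCommutative_closure ?_
  rintro _ ⟨c, rfl⟩ _ ⟨d, rfl⟩
  ext b
  exact hab b d c

theorem smul_op (hab : IsAbelianOp op) (g : hr.innerGroup) (b x : X) :
    g • op b x = op (g • b) x := by
  have := hr.isMulCommutative_innerGroup hab
  simp only [← hr.innerTranslation_smul, smul_smul, mul_comm']

theorem fstSMul_mem_orbZ2 (hab : IsAbelianOp op) {O : Set X} {g : hr.innerGroup}
    (hg : Set.MapsTo (g • ·) O O) {z : FreeAbelianGroup (X × X)} (hz : z ∈ orbZ2 op O) :
    fstSMul g z ∈ orbZ2 op O := by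
  obtain ⟨hz₁ : d2 op z = 0, hz₂⟩ := hz
  constructor
  · have hcomm : (d2 op).comp (fstSMul g) = (FreeAbelianGroup.map (g • ·)).comp (d2 op) := by
      refine lift_ext _ _ fun ⟨b, x⟩ => ?_
      simp [map_of_apply, hr.smul_op hab]
    simpa [hz₁] using DFunLike.congr_fun hcomm z
  · refine orbC2_le (K := (orbC2 O).comap (fstSMul g)) (fun b hb x => ?_) hz₂
    simpa using of_mem_orbC2 (hg hb) x

theorem fstSMul_mem_orbB2 (hab : IsAbelianOp op) {O : Set X} {g : hr.innerGroup}
    (hg : Set.MapsTo (g • ·) O O) {z : FreeAbelianGroup (X × X)} (hz : z ∈ orbB2 op O) :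
    fstSMul g z ∈ orbB2 op O := by
  refine orbB2_le (K := (orbB2 op O).comap (fstSMul g)) (fun b hb x y => ?_) hz
  have hcomm : fstSMul g (d3 op (of (b, x, y))) = d3 op (of (g • b, x, y)) := by
    simp [d3_of, hr.smul_op hab]
  rw [AddSubgroup.mem_comap, hcomm]
  exact d3_of_mem_orbB2 (hg hb) x y

/-- The action of the inner group on `H_{2;O}` through the first coordinate. -/
noncomputable def homologyAction (hab : IsAbelianOp op) {O : Set X}
    (hO : ∀ g : hr.innerGroup, Set.MapsTo (g • ·) O O) :
    hr.innerGroup →* AddMonoid.End (H2Orb op O) where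
  toFun g := QuotientAddGroup.map _ _
    (((fstSMul g).comp (orbZ2 op O).subtype).codRestrict (orbZ2 op O)
      fun z => hr.fstSMul_mem_orbZ2 hab (hO g) z.2)
    fun _ hz => hr.fstSMul_mem_orbB2 hab (hO g) hz
  map_one' := QuotientAddGroup.addMonoidHom_ext _ <| AddMonoidHom.ext fun z =>
    congrArg QuotientAddGroup.mk (Subtype.ext (fstSMul_one z.1))
  map_mul' g h := QuotientAddGroup.addMonoidHom_ext _ <| AddMonoidHom.ext fun z =>
    congrArg QuotientAddGroup.mk (Subtype.ext (fstSMul_mul g h z.1))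

theorem homologyAction_mk (hab : IsAbelianOp op) {O : Set X}
    (hO : ∀ g : hr.innerGroup, Set.MapsTo (g • ·) O O) (g : hr.innerGroup) (z : orbZ2 op O) :
    hr.homologyAction hab hO g (z : H2Orb op O) =
      (⟨fstSMul g z, hr.fstSMul_mem_orbZ2 hab (hO g) z.2⟩ : orbZ2 op O) := rfl

theorem homologyAction_eq_one (hab : IsAbelianOp op) {O : Set X}
    (hO : ∀ g : hr.innerGroup, Set.MapsTo (g • ·) O O) {g : hr.innerGroup}
    (hg : ∀ b ∈ O, g • b = b) : hr.homologyAction hab hO g = 1 := by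
  refine QuotientAddGroup.addMonoidHom_ext _ (AddMonoidHom.ext fun z => ?_)
  have hz : fstSMul g z.1 = AddMonoidHom.id _ z.1 :=
    map_eq_map_of_mem_orbC2 (fun b hb x => by simp [hg b hb]) z.2.2
  exact congrArg QuotientAddGroup.mk (Subtype.ext hz)

theorem fstSMul_sub_self_sub_conjDiff_mem_orbB2 {O : Set X} (c : X)
    {z : FreeAbelianGroup (X × X)} (hz : z ∈ orbZ2 op O) :
    fstSMul (hr.innerTranslation c) z - z - conjDiff op c z ∈ orbB2 op O := by
  obtain ⟨hz₁ : d2 op z = 0, hz₂⟩ := hz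
  let f := fstSMul (hr.innerTranslation c) - AddMonoidHom.id _ - conjDiff op c
    - (FreeAbelianGroup.map fun b => (b, c)).comp (d2 op)
  have hf : f z = fstSMul (hr.innerTranslation c) z - z - conjDiff op c z := by simp [f, hz₁]
  rw [← hf]
  refine orbC2_le (K := (orbB2 op O).comap f) (fun b hb x => ?_) hz₂
  have hfb : f (of (b, x)) = d3 op (of (b, c, x)) := by
    simp only [f, AddMonoidHom.sub_apply, AddMonoidHom.comp_apply, AddMonoidHom.id_apply,
      fstSMul_of, innerTranslation_smul, conjDiff_of, d2_of, d3_of, map_sub, map_of_apply]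
    abel
  rw [AddSubgroup.mem_comap, hfb]
  exact d3_of_mem_orbB2 hb c x

theorem fstSMul_conjDiff_sub_conjDiff_mem_orbB2 (hab : IsAbelianOp op) {O : Set X}
    (hO : ∀ g : hr.innerGroup, Set.MapsTo (g • ·) O O) (c d : X)
    {z : FreeAbelianGroup (X × X)} (hz : z ∈ orbC2 O) :
    fstSMul (hr.innerTranslation d) (conjDiff op c z) - conjDiff op c z ∈ orbB2 op O := by
  let f := (fstSMul (hr.innerTranslation d)).comp (conjDiff op c) - conjDiff op c
  refine orbC2_le (K := (orbB2 op O).comap f) (fun b hb x => ?_) hz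
  have hfb : f (of (b, x)) = d3 op (of (op b x, d, op c x)) - d3 op (of (op b x, d, c)) := by
    simp only [f, AddMonoidHom.sub_apply, AddMonoidHom.comp_apply, fstSMul_of,
      innerTranslation_smul, conjDiff_of, d3_of, map_sub, hr.op_op_right hab]
    abel
  rw [AddSubgroup.mem_comap, hfb]
  have hbx : op b x ∈ O := hO (hr.innerTranslation x) hb
  exact sub_mem (d3_of_mem_orbB2 hbx _ _) (d3_of_mem_orbB2 hbx _ _)

theorem homologyAction_sub_one_mul_sub_one (hab : IsAbelianOp op) {O : Set X}
    (hO : ∀ g : hr.innerGroup, Set.MapsTo (g • ·) O O) (c d : X) :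
    (hr.homologyAction hab hO (hr.innerTranslation d) - 1) *
      (hr.homologyAction hab hO (hr.innerTranslation c) - 1) = 0 := by
  refine QuotientAddGroup.addMonoidHom_ext _ (AddMonoidHom.ext fun z => ?_)
  set T := fstSMul (X := X) (hr.innerTranslation d)
  set w := fstSMul (hr.innerTranslation c) z.1 - z
  have hwB : w - conjDiff op c z ∈ orbB2 op O :=
    hr.fstSMul_sub_self_sub_conjDiff_mem_orbB2 c z.2
  have hTw : T w - w ∈ orbB2 op O := by
    have hsplit : T w - w = T (w - conjDiff op c z) - (w - conjDiff op c z)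
        + (T (conjDiff op c z) - conjDiff op c z) := by
      rw [map_sub T w]; abel
    rw [hsplit]
    exact add_mem (sub_mem (hr.fstSMul_mem_orbB2 hab (hO _) hwB) hwB)
      (hr.fstSMul_conjDiff_sub_conjDiff_mem_orbB2 hab hO c d z.2.2)
  exact (QuotientAddGroup.eq_zero_iff _).2 hTw

theorem nsmul_homologyAction_apply (hab : IsAbelianOp op) (a : X) (g : hr.innerGroup)
    (z : H2Orb op (orbit hr.innerGroup a)) :
    (orbit hr.innerGroup a).ncard • hr.homologyAction hab (mapsTo_smul_orbit · a) g z =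
      (orbit hr.innerGroup a).ncard • z := by
  have := hr.isMulCommutative_innerGroup hab
  let φ := hr.homologyAction hab (mapsTo_smul_orbit · a)
  have hzero : (orbit hr.innerGroup a).ncard • (φ g - 1) = 0 := by
    refine nsmul_map_sub_one_eq_zero_of_closure (R := AddMonoid.End (H2Orb op _)) φ
      hr.closure_range_innerTranslation ?_ g
    rintro _ ⟨c, rfl⟩
    rw [← pow_sub_one_eq_nsmul (hr.homologyAction_sub_one_mul_sub_one hab _ c c), ← map_pow,
      hr.homologyAction_eq_one hab _ fun b hb => pow_ncard_orbit_smul _ hb, sub_self]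
  rw [← sub_eq_zero, ← nsmul_sub]
  exact DFunLike.congr_fun hzero z

theorem sum_of_op_sub_mem_orbB2 (a x c : X) [Fintype (orbit hr.innerGroup a)] :
    ∑ b : orbit hr.innerGroup a, of (b.1, x) - ∑ b : orbit hr.innerGroup a, of (b.1, op x c) ∈
      orbB2 op (orbit hr.innerGroup a) := by
  have hperm (v u : X) : ∑ b : orbit hr.innerGroup a, of (op b.1 v, u) =
      ∑ b : orbit hr.innerGroup a, of (b.1, u) :=
    Equiv.sum_comp (toPerm (hr.innerTranslation v)) fun b : orbit hr.innerGroup a => of (b.1, u)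
  have hd3 : ∑ b : orbit hr.innerGroup a, of (b.1, x) -
      ∑ b : orbit hr.innerGroup a, of (b.1, op x c) =
      ∑ b : orbit hr.innerGroup a, d3 op (of (b.1, x, c)) := by
    simp only [d3_of, Finset.sum_add_distrib, Finset.sum_sub_distrib, hperm]
    abel
  rw [hd3]
  exact sum_mem fun b _ => d3_of_mem_orbB2 b.2 x c

theorem orbitSum_mem_orbB2 (a : X) [Fintype (orbit hr.innerGroup a)]
    {z : FreeAbelianGroup (X × X)} (hz : sndOrbit op z = 0) :
    orbitSum (orbit hr.innerGroup a) z ∈ orbB2 op (orbit hr.innerGroup a) := by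
  let mkB := QuotientAddGroup.mk' (orbB2 op (orbit hr.innerGroup a))
  let s (x : X) := mkB (∑ b : orbit hr.innerGroup a, of (b.1, x))
  have hs : orbitSetoid op ≤ Setoid.ker s := by
    refine Setoid.eqvGen_le ?_
    rintro x _ ⟨c, rfl⟩
    refine sub_eq_zero.1 ((map_sub mkB _ _).symm.trans ?_)
    exact (QuotientAddGroup.eq_zero_iff _).2 (hr.sum_of_op_sub_mem_orbB2 a x c)
  have hfactor : mkB.comp (orbitSum (orbit hr.innerGroup a)) =
      (FreeAbelianGroup.lift (Quotient.lift s hs)).comp (sndOrbit op) := by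
    refine lift_ext _ _ fun ⟨b, x⟩ => ?_
    simp [sndOrbit_of, s]
  refine (QuotientAddGroup.eq_zero_iff _).1 ?_
  have hfactor_z := DFunLike.congr_fun hfactor z
  rwa [AddMonoidHom.comp_apply, AddMonoidHom.comp_apply, hz, map_zero] at hfactor_z

theorem orbitSum_eq_sum_fstSMul (hab : IsAbelianOp op) (a : X) [Fintype (orbit hr.innerGroup a)]
    {g : orbit hr.innerGroup a → hr.innerGroup} (hg : ∀ b, g b • a = b)
    {z : FreeAbelianGroup (X × X)} (hz : z ∈ orbC2 (orbit hr.innerGroup a)) :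
    orbitSum (orbit hr.innerGroup a) z = ∑ b, fstSMul (g b) z := by
  have := hr.isMulCommutative_innerGroup hab
  rw [← AddMonoidHom.finsetSum_apply]
  refine map_eq_map_of_mem_orbC2 ?_ hz
  rintro _ ⟨k, rfl⟩ x
  have hk (b : orbit hr.innerGroup a) : g b • k • a = (k • b : orbit hr.innerGroup a) := by
    rw [smul_smul, mul_comm', mul_smul, hg]; rfl
  simp only [orbitSum_of, AddMonoidHom.finsetSum_apply, fstSMul_of, hk]
  exact (Equiv.sum_comp (toPerm k) fun b : orbit hr.innerGroup a => of (b.1, x)).symm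

theorem sum_homologyAction_eq_zero (hab : IsAbelianOp op) (a : X) [Fintype (orbit hr.innerGroup a)]
    {g : orbit hr.innerGroup a → hr.innerGroup} (hg : ∀ b, g b • a = b)
    {z : H2Orb op (orbit hr.innerGroup a)} (hz : IsOfFinAddOrder z) :
    ∑ b, hr.homologyAction hab (mapsTo_smul_orbit · a) (g b) z = 0 := by
  induction z using QuotientAddGroup.induction_on with
  | H z =>
    have hsum := hr.orbitSum_mem_orbB2 a (sndOrbit_eq_zero_of_isOfFinAddOrder z hz)
    rw [hr.orbitSum_eq_sum_fstSMul hab a hg z.2.2] at hsum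
    simp only [homologyAction_mk]
    rw [← QuotientAddGroup.mk_sum]
    refine (QuotientAddGroup.eq_zero_iff _).2 ?_
    simpa [AddSubgroup.mem_addSubgroupOf] using hsum

end IsRackOp

theorem torsion_of_H2Orb_killed_by_card_sq_general (op : X → X → X) (hr : IsRackOp op)
    (hab : IsAbelianOp op) (a : X) (hfin : {x | orbitRel op a x}.Finite) (n : ℕ)
    (hn : Nat.card {x | orbitRel op a x} = n) :
    ∀ z : H2Orb op {x | orbitRel op a x}, IsOfFinAddOrder z → n ^ 2 • z = 0 := by
  rw [Nat.card_coe_set_eq] at hn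
  rw [hr.setOf_orbitRel_eq_orbit] at hfin hn ⊢
  subst hn
  intro z hz
  have := hfin.fintype
  choose g hg using fun b : orbit hr.innerGroup a => b.2
  let n := (orbit hr.innerGroup a).ncard
  calc n ^ 2 • z = ∑ _b : orbit hr.innerGroup a, n • z := by
        rw [Finset.sum_const, Finset.card_univ, ← Nat.card_eq_fintype_card,
          Nat.card_coe_set_eq, sq, mul_smul]
    _ = n • ∑ b, hr.homologyAction hab (mapsTo_smul_orbit · a) (g b) z := by
        simp only [Finset.smul_sum, n, hr.nsmul_homologyAction_apply hab]
    _ = 0 := by rw [hr.sum_homologyAction_eq_zero hab a hg hz, smul_zero]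

/-- For a finite abelian quandle and an orbit `O` (the orbit of `a`)
with `n` elements, every torsion element `z` of `H_{2;O}` satisfies `n² • z = 0`. -/
theorem torsion_of_H2Orb_killed_by_card_sq {X : Type*} [Finite X] (op : X → X → X)
    (hq : IsQuandleOp op) (hab : IsAbelianOp op) (a : X) (n : ℕ)
    (hn : Nat.card {x | orbitRel op a x} = n) :
    ∀ z : H2Orb op {x | orbitRel op a x}, IsOfFinAddOrder z → n ^ 2 • z = 0 :=
  torsion_of_H2Orb_killed_by_card_sq_general op hq.isRackOp hab a (Set.toFinite _) n hn
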